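/- The element Δ := t⁻¹·id of PPU(b) is a singular strong order unit for the right-invariant lattice order with negative cone PPU(b)⁻: (a) Δ is normal, i.e. Δ(g ⊔ h) = Δg ⊔ Δh for all g, h ∈ PPU(b); (b) Δ is an order unit, i.e. for every g ∈ PPU(b) there exists m ∈ ℤ with g ≤ Δ^m; (c) Δ is singular, i.e. for all x, y ∈ PPU(b)⁻, if Δ ≤ xy then yx = x ⊓ y. Moreover, for every k-subspace U ⊆ V one has p_U p_{U*} = Δ, so the orthocomplementation g ↦ g⁻¹Δ on the interval [Δ, id] sends p_U to p_{U*}. -/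

import Mathlib

open Finsupp

variable (k : Type*) [Field k] (V : Type*) [AddCommGroup V] [Module k V]

/-- Multiplication by `t^n` on `V[t,t⁻¹] := ℤ →₀ V` (writing `v = ∑ᵢ tⁱ vᵢ` as the
finitely supported function `i ↦ vᵢ`). -/
noncomputable def shift (n : ℤ) : (ℤ →₀ V) ≃ₗ[k] (ℤ →₀ V) :=
  Finsupp.domLCongr (Equiv.addRight n)

/-- The coefficient of `tⁿ` of `b̃(v,w) = ∑ₙ tⁿ (∑ᵢ b(v_{i-n}, w_i))`. -/
noncomputable def Btilde (b : LinearMap.BilinForm k V) (n : ℤ) (v w : ℤ →₀ V) : k :=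
  w.sum fun i wi => b (v (i - n)) wi

/-- `φ` is a paraunitary transformation: an invertible `k[t,t⁻¹]`-linear
(i.e. `k`-linear and commuting with multiplication by `t`) endomorphism of
`V[t,t⁻¹]` preserving `b̃`. -/
def IsPU (b : LinearMap.BilinForm k V) (φ : (ℤ →₀ V) ≃ₗ[k] (ℤ →₀ V)) : Prop :=
  (∀ v, φ (shift k V 1 v) = shift k V 1 (φ v)) ∧
  ∀ (n : ℤ) (v w : ℤ →₀ V), Btilde k V b n (φ v) (φ w) = Btilde k V b n v w

/-- The specialization `t = 1` of a `k[t,t⁻¹]`-linear endomorphism `f = ∑ᵢ tⁱ fᵢ`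
of `V[t,t⁻¹]`, i.e. the endomorphism `ε₁(f) = ∑ᵢ fᵢ` of `V`. -/
noncomputable def eps (f : (ℤ →₀ V) →ₗ[k] (ℤ →₀ V)) : V →ₗ[k] V :=
  (Finsupp.lsum k fun _ : ℤ => (LinearMap.id : V →ₗ[k] V)) ∘ₗ f ∘ₗ Finsupp.lsingle 0

/-- `φ` is pure paraunitary: paraunitary and specializing to the identity at `t = 1`. -/
def IsPPU (b : LinearMap.BilinForm k V) (φ : (ℤ →₀ V) ≃ₗ[k] (ℤ →₀ V)) : Prop :=
  IsPU k V b φ ∧ eps k V (φ : (ℤ →₀ V) →ₗ[k] (ℤ →₀ V)) = LinearMap.id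

/-- `φ ∈ PPU(b)⁻`: pure paraunitary and all Laurent coefficients `φᵢ` for `i > 0` vanish. -/
def PPUneg (b : LinearMap.BilinForm k V) (φ : (ℤ →₀ V) ≃ₗ[k] (ℤ →₀ V)) : Prop :=
  IsPPU k V b φ ∧ ∀ (x : V) (i : ℤ), 0 < i → φ (Finsupp.single 0 x) i = 0

/-- The orthogonal complement `U* = {v ∈ V | b(u,v) = 0 for all u ∈ U}`. -/
def orthoC (b : LinearMap.BilinForm k V) (U : Submodule k V) : Submodule k V where
  carrier := {v | ∀ u ∈ U, b u v = 0}
  add_mem' := by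
    intro a c ha hc u hu
    simp only [Set.mem_setOf_eq] at *
    rw [map_add, ha u hu, hc u hu, add_zero]
  zero_mem' := by intro u _; simp
  smul_mem' := by
    intro c x hx u hu
    simp only [Set.mem_setOf_eq] at *
    rw [map_smul, hx u hu, smul_zero]

/-- The endomorphism `p_U = t⁻¹ π_{U*} + π_U` of `V[t,t⁻¹]`, where `π` is the
projection of `V` onto `U` along `U*` (so that `π_{U*} = 1 - π`). -/
noncomputable def pULin (π : V →ₗ[k] V) : (ℤ →₀ V) →ₗ[k] (ℤ →₀ V) :=
  (shift k V (-1)).toLinearMap ∘ₗ Finsupp.mapRange.linearMap (LinearMap.id - π) +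
    Finsupp.mapRange.linearMap π

variable {k V} in
/-- The right-invariant order on `PPU(b)` with negative cone `PPU(b)⁻`. -/
def PPUle (b : LinearMap.BilinForm k V) (φ ψ : (ℤ →₀ V) ≃ₗ[k] (ℤ →₀ V)) : Prop :=
  PPUneg k V b (φ * ψ⁻¹)

variable {k V} in
/-- `j` is the join of `g` and `h` in `(PPU(b), ≤)`. -/
def IsJoinC (b : LinearMap.BilinForm k V) (g h j : (ℤ →₀ V) ≃ₗ[k] (ℤ →₀ V)) : Prop :=
  IsPPU k V b j ∧ PPUle b g j ∧ PPUle b h j ∧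
    ∀ c, IsPPU k V b c → PPUle b g c → PPUle b h c → PPUle b j c

variable {k V} in
/-- `m` is the meet of `g` and `h` in `(PPU(b), ≤)`. -/
def IsMeetC (b : LinearMap.BilinForm k V) (g h m : (ℤ →₀ V) ≃ₗ[k] (ℤ →₀ V)) : Prop :=
  IsPPU k V b m ∧ PPUle b m g ∧ PPUle b m h ∧
    ∀ c, IsPPU k V b c → PPUle b c g → PPUle b c h → PPUle b c m

section aux
variable {k : Type*} [Field k] {V : Type*} [AddCommGroup V] [Module k V]

theorem shift_app (n : ℤ) (v : ℤ →₀ V) (i : ℤ) : shift k V n v i = v (i - n) := by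
  simp [shift, Finsupp.domLCongr_apply, sub_eq_add_neg]

theorem shift_single (n i : ℤ) (x : V) :
    shift k V n (Finsupp.single i x) = Finsupp.single (i + n) x := by
  simp [shift, Finsupp.domLCongr_apply]

theorem shift_add' (m n : ℤ) : shift k V (m + n) = shift k V m * shift k V n := by
  ext v i
  simp only [LinearEquiv.mul_apply, shift_app]
  congr 1; ring

theorem shift_zero' : shift k V 0 = 1 := by
  ext v i
  simp [shift_app]

theorem shift_neg' (n : ℤ) : shift k V (-n) = (shift k V n)⁻¹ := by
  rw [eq_inv_iff_mul_eq_one, ← shift_add', neg_add_cancel, shift_zero']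

theorem shift_zpow (n m : ℤ) : shift k V n ^ m = shift k V (m * n) := by
  induction m using Int.induction_on with
  | zero => simp [shift_zero']
  | succ i ih => rw [zpow_add_one, ih, ← shift_add']; congr 1; ring
  | pred i ih => rw [zpow_sub_one, ih, ← shift_neg', ← shift_add']; congr 1; ring

theorem commute_shift {φ : (ℤ →₀ V) ≃ₗ[k] (ℤ →₀ V)}
    (h : ∀ v, φ (shift k V 1 v) = shift k V 1 (φ v)) (n : ℤ) : Commute φ (shift k V n) := by
  have h1 : Commute φ (shift k V 1) := by
    apply LinearEquiv.ext; intro v; exact h v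
  have h2 := h1.zpow_right n
  rwa [shift_zpow, mul_one] at h2

theorem app_single {φ : (ℤ →₀ V) ≃ₗ[k] (ℤ →₀ V)}
    (h : ∀ v, φ (shift k V 1 v) = shift k V 1 (φ v)) (n : ℤ) (x : V) :
    φ (Finsupp.single n x) = shift k V n (φ (Finsupp.single 0 x)) := by
  have h1 := LinearEquiv.congr_fun (commute_shift h n).eq (Finsupp.single 0 x)
  simpa [LinearEquiv.mul_apply, shift_single] using h1

noncomputable def sumS : (ℤ →₀ V) →ₗ[k] V :=
  Finsupp.lsum k fun _ : ℤ => (LinearMap.id : V →ₗ[k] V)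

theorem sumS_single (n : ℤ) (x : V) : sumS (k := k) (Finsupp.single n x) = x := by
  simp [sumS]

theorem sumS_shift (n : ℤ) (v : ℤ →₀ V) : sumS (k := k) (shift k V n v) = sumS (k := k) v := by
  induction v using Finsupp.induction_linear with
  | zero => simp
  | add f g hf hg => simp [map_add, hf, hg]
  | single i x => rw [shift_single, sumS_single, sumS_single]

theorem sumS_PPU {b : LinearMap.BilinForm k V} {φ : (ℤ →₀ V) ≃ₗ[k] (ℤ →₀ V)}
    (h : IsPPU k V b φ) (v : ℤ →₀ V) : sumS (k := k) (φ v) = sumS (k := k) v := by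
  induction v using Finsupp.induction_linear with
  | zero => simp
  | add f g hf hg => simp [map_add, hf, hg]
  | single i x =>
    rw [app_single h.1.1, sumS_shift, sumS_single]
    exact LinearMap.congr_fun h.2 x

theorem eps_of {φ : (ℤ →₀ V) ≃ₗ[k] (ℤ →₀ V)} (h : ∀ v, sumS (k := k) (φ v) = sumS (k := k) v) :
    eps k V (φ : (ℤ →₀ V) →ₗ[k] (ℤ →₀ V)) = LinearMap.id := by
  ext x
  have := h (Finsupp.single 0 x)
  rw [sumS_single] at this
  exact this

theorem PPU_mul {b : LinearMap.BilinForm k V} {φ ψ : (ℤ →₀ V) ≃ₗ[k] (ℤ →₀ V)}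
    (h : IsPPU k V b φ) (h' : IsPPU k V b ψ) : IsPPU k V b (φ * ψ) := by
  refine ⟨⟨fun v => ?_, fun n v w => ?_⟩, eps_of fun v => ?_⟩
  · simp only [LinearEquiv.mul_apply, h.1.1, h'.1.1]
  · simp only [LinearEquiv.mul_apply, h.1.2, h'.1.2]
  · simp only [LinearEquiv.mul_apply, sumS_PPU h, sumS_PPU h']

theorem app_inv (φ : (ℤ →₀ V) ≃ₗ[k] (ℤ →₀ V)) (v : ℤ →₀ V) : φ (φ⁻¹ v) = v :=
  LinearEquiv.apply_symm_apply φ v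

theorem inv_app (φ : (ℤ →₀ V) ≃ₗ[k] (ℤ →₀ V)) (v : ℤ →₀ V) : φ⁻¹ (φ v) = v :=
  LinearEquiv.symm_apply_apply φ v

theorem PPU_inv {b : LinearMap.BilinForm k V} {φ : (ℤ →₀ V) ≃ₗ[k] (ℤ →₀ V)}
    (h : IsPPU k V b φ) : IsPPU k V b φ⁻¹ := by
  refine ⟨⟨fun v => ?_, fun n v w => ?_⟩, eps_of fun v => ?_⟩
  · apply φ.injective
    rw [h.1.1, app_inv, app_inv]
  · rw [← h.1.2, app_inv, app_inv]
  · rw [← sumS_PPU h, app_inv]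

theorem PPU_shift (b : LinearMap.BilinForm k V) (n : ℤ) : IsPPU k V b (shift k V n) := by
  refine ⟨⟨fun v => ?_, fun m v w => ?_⟩, eps_of fun v => sumS_shift n v⟩
  · rw [← LinearEquiv.mul_apply, ← LinearEquiv.mul_apply, ← shift_add', ← shift_add', add_comm]
  · unfold Btilde
    rw [show shift k V n w = Finsupp.equivMapDomain (Equiv.addRight n) w from rfl,
      Finsupp.sum_equivMapDomain]
    apply Finsupp.sum_congr
    intro i _
    rw [shift_app]
    congr 3
    simp only [Equiv.coe_addRight]
    ring

theorem app_coeff {φ : (ℤ →₀ V) ≃ₗ[k] (ℤ →₀ V)}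
    (h : ∀ v, φ (shift k V 1 v) = shift k V 1 (φ v)) (m : ℤ)
    (hm : ∀ (x : V) (i : ℤ), m < i → φ (Finsupp.single 0 x) i = 0)
    (l : ℤ) (v : ℤ →₀ V) (hv : ∀ i, l < i → v i = 0) (j : ℤ) (hj : m + l < j) : φ v j = 0 := by
  have : v = v.sum Finsupp.single := (Finsupp.sum_single v).symm
  rw [this, Finsupp.sum, map_sum, Finsupp.finset_sum_apply]
  apply Finset.sum_eq_zero
  intro i hi
  rw [app_single h, shift_app]
  apply hm
  have : i ≤ l := by
    by_contra hc
    exact (Finsupp.mem_support_iff.1 hi) (hv i (by omega))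
  omega

theorem neg_mul' {b : LinearMap.BilinForm k V} {φ ψ : (ℤ →₀ V) ≃ₗ[k] (ℤ →₀ V)}
    (h : PPUneg k V b φ) (h' : PPUneg k V b ψ) : PPUneg k V b (φ * ψ) := by
  refine ⟨PPU_mul h.1 h'.1, fun x i hi => ?_⟩
  exact app_coeff h.1.1.1 0 h.2 0 _ (h'.2 x) i (by omega)

theorem order_unit [FiniteDimensional k V] (b : LinearMap.BilinForm k V)
    (g : (ℤ →₀ V) ≃ₗ[k] (ℤ →₀ V)) (hg : IsPPU k V b g) :
    ∃ m : ℤ, PPUle b g (shift k V (-1) ^ m) := by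
  let B := Module.finBasis k V
  obtain ⟨M, hM⟩ : ∃ M : ℤ, ∀ s, ∀ i, M < i → g (Finsupp.single 0 (B s)) i = 0 := by
    have h1 : ∀ s, ∃ M : ℤ, ∀ i, M < i → g (Finsupp.single 0 (B s)) i = 0 := by
      intro s
      obtain ⟨M, hM⟩ := (g (Finsupp.single 0 (B s))).support.bddAbove
      refine ⟨M, fun i hi => ?_⟩
      by_contra hc
      have := hM (Finset.mem_coe.2 (Finsupp.mem_support_iff.2 hc))
      omega
    choose F hF using h1
    obtain ⟨M, hM⟩ := (Set.finite_range F).bddAbove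
    exact ⟨M, fun s i hi => hF s i (lt_of_le_of_lt (hM ⟨s, rfl⟩) hi)⟩
  have hM' : ∀ (x : V) (i : ℤ), M < i → g (Finsupp.single 0 x) i = 0 := by
    intro x i hi
    have h0 : (Finsupp.lapply i ∘ₗ (g : (ℤ →₀ V) →ₗ[k] (ℤ →₀ V)) ∘ₗ Finsupp.lsingle 0
        : V →ₗ[k] V) = 0 := by
      apply B.ext
      intro s
      exact hM s i hi
    exact LinearMap.congr_fun h0 x
  refine ⟨-M, PPU_mul hg (PPU_inv ?_), ?_⟩
  · rw [shift_zpow]; exact PPU_shift b _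
  · intro x i hi
    rw [shift_zpow, ← shift_neg', LinearEquiv.mul_apply, shift_single, app_single hg.1.1, shift_app]
    apply hM'
    omega

theorem inv_coeff {b : LinearMap.BilinForm k V} (haniso : ∀ v : V, b v v = 0 → v = 0)
    {x : (ℤ →₀ V) ≃ₗ[k] (ℤ →₀ V)} (h : PPUneg k V b x) (v : V) (i : ℤ) (hi : i < 0) :
    x⁻¹ (Finsupp.single 0 v) i = 0 := by
  apply haniso
  set w := x⁻¹ (Finsupp.single 0 v) i with hw
  have h1 := h.1.1.2 (-i) (x⁻¹ (Finsupp.single 0 v)) (Finsupp.single 0 w)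
  rw [app_inv] at h1
  have h2 : Btilde k V b (-i) (x⁻¹ (Finsupp.single 0 v)) (Finsupp.single 0 w) = b w w := by
    unfold Btilde
    rw [Finsupp.sum_single_index (by simp)]
    simp [hw]
  rw [← h2, ← h1]
  unfold Btilde
  apply Finset.sum_eq_zero
  intro j _
  beta_reduce
  by_cases hj : j = -i
  · rw [hj, h.2 w (-i) (by omega)]; simp
  · rw [Finsupp.single_eq_of_ne (by omega)]; simp

/-- the form of the inverse of an element of the interval -/
theorem inv_form {b : LinearMap.BilinForm k V} (hsymm : ∀ v w : V, b v w = b w v)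
    (haniso : ∀ v : V, b v v = 0 → v = 0)
    {x : (ℤ →₀ V) ≃ₗ[k] (ℤ →₀ V)} (h : PPUneg k V b x)
    (h' : PPUneg k V b (shift k V (-1) * x⁻¹)) :
    ∃ A : V →ₗ[k] V, (∀ v w, b (A v) w = b v (A w)) ∧
      ∀ i v, x⁻¹ (Finsupp.single i v) =
        Finsupp.single i v - Finsupp.single i (A v) + Finsupp.single (i + 1) (A v) := by
  have hinv := PPU_inv h.1
  let A : V →ₗ[k] V :=
    Finsupp.lapply 1 ∘ₗ ((x⁻¹ : (ℤ →₀ V) ≃ₗ[k] (ℤ →₀ V)) : (ℤ →₀ V) →ₗ[k] (ℤ →₀ V)) ∘ₗ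
      Finsupp.lsingle 0
  have hA : ∀ v, A v = x⁻¹ (Finsupp.single 0 v) 1 := fun v => rfl
  have h2 : ∀ v, x⁻¹ (Finsupp.single 0 v) =
      Finsupp.single 0 (x⁻¹ (Finsupp.single 0 v) 0) + Finsupp.single 1 (A v) := by
    intro v
    ext i
    by_cases h0 : i = 0
    · subst h0; simp
    by_cases h1 : i = 1
    · subst h1; simp [hA]
    rw [Finsupp.add_apply, Finsupp.single_eq_of_ne h0, Finsupp.single_eq_of_ne h1, add_zero]
    by_cases hi : i < 0
    · exact inv_coeff haniso h v i hi
    · have := h'.2 v (i - 1) (by omega)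
      rwa [LinearEquiv.mul_apply, shift_app, show i - 1 - -1 = i by ring] at this
  have h3 : ∀ v, x⁻¹ (Finsupp.single 0 v) 0 = v - A v := by
    intro v
    have := sumS_PPU hinv (Finsupp.single 0 v)
    rw [h2, map_add, sumS_single, sumS_single, sumS_single] at this
    exact eq_sub_of_add_eq this
  have h4 : ∀ v, x⁻¹ (Finsupp.single 0 v) =
      Finsupp.single 0 v - Finsupp.single 0 (A v) + Finsupp.single 1 (A v) := by
    intro v
    rw [h2, h3, Finsupp.single_sub]
  have key : ∀ v w, b (v - A v) (A w) = 0 := by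
    intro v w
    have := hinv.1.2 1 (Finsupp.single 0 v) (Finsupp.single 0 w)
    rw [h2 w, h3 w] at this
    unfold Btilde at this
    rw [Finsupp.sum_add_index' (by simp) (by simp), Finsupp.sum_single_index (by simp),
      Finsupp.sum_single_index (by simp), Finsupp.sum_single_index (by simp),
      inv_coeff haniso h v _ (by omega), Finsupp.single_eq_of_ne (by omega), sub_self, h3] at this
    simpa using this
  refine ⟨A, fun v w => ?_, fun i v => ?_⟩
  · have e1 := key v w
    have e2 := key w v
    rw [map_sub, LinearMap.sub_apply, sub_eq_zero] at e1 e2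
    rw [e1, hsymm (A v) w, e2, hsymm]
  · rw [app_single hinv.1.1, h4]
    simp only [map_add, map_sub, shift_single]
    rw [zero_add, add_comm 1 i]

theorem inv_mul_form {x y : (ℤ →₀ V) ≃ₗ[k] (ℤ →₀ V)} {A B : V →ₗ[k] V}
    (hx : ∀ i v, x⁻¹ (Finsupp.single i v) =
        Finsupp.single i v - Finsupp.single i (A v) + Finsupp.single (i + 1) (A v))
    (hy : ∀ i v, y⁻¹ (Finsupp.single i v) =
        Finsupp.single i v - Finsupp.single i (B v) + Finsupp.single (i + 1) (B v))
    (hBA : ∀ v, B (A v) = 0) (u : ℤ →₀ V) : y⁻¹ (x⁻¹ u) = y⁻¹ u + x⁻¹ u - u := by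
  induction u using Finsupp.induction_linear with
  | zero => simp
  | add f g hf hg => simp only [map_add, hf, hg]; abel
  | single i v =>
    rw [hx, map_add, map_sub, hy, hy, hy, hBA]
    simp only [Finsupp.single_zero]
    abel

theorem singular {b : LinearMap.BilinForm k V} (hsymm : ∀ v w : V, b v w = b w v)
    (haniso : ∀ v : V, b v v = 0 → v = 0) (x y : (ℤ →₀ V) ≃ₗ[k] (ℤ →₀ V))
    (hx : PPUneg k V b x) (hy : PPUneg k V b y) (hxy : PPUle b (shift k V (-1)) (x * y)) :
    IsMeetC b x y (y * x) := by
  unfold PPUle at hxy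
  have cy := commute_shift hy.1.1.1 (-1)
  have hx' : PPUneg k V b (shift k V (-1) * x⁻¹) := by
    have := neg_mul' hy hxy
    rwa [mul_inv_rev, ← mul_assoc, ← mul_assoc, cy.eq, mul_assoc (shift k V (-1)) y,
      mul_inv_cancel, mul_one] at this
  have hy' : PPUneg k V b (shift k V (-1) * y⁻¹) := by
    have := neg_mul' hxy hx
    rwa [mul_inv_rev, mul_assoc, mul_assoc, inv_mul_cancel, mul_one] at this
  obtain ⟨A, sA, fA⟩ := inv_form hsymm haniso hx hx'
  obtain ⟨B, sB, fB⟩ := inv_form hsymm haniso hy hy'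
  have hBA : ∀ v, B (A v) = 0 := by
    intro v
    have := hxy.2 v 1 (by omega)
    rw [mul_inv_rev, LinearEquiv.mul_apply, LinearEquiv.mul_apply, shift_app, fA, map_add y⁻¹, map_sub y⁻¹,
      fB, fB, fB] at this
    simpa [Finsupp.single_apply] using this
  have hAB : ∀ v, A (B v) = 0 := by
    intro v
    apply haniso
    rw [sA, sB, hBA, map_zero]
  have m1 := inv_mul_form fA fB hBA
  have m2 := inv_mul_form fB fA hAB
  have comm : y * x = x * y := by
    apply inv_injective
    apply LinearEquiv.ext
    intro u
    rw [mul_inv_rev, mul_inv_rev, LinearEquiv.mul_apply, LinearEquiv.mul_apply, m1, m2]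
    abel
  refine ⟨PPU_mul hy.1 hx.1, ?_, ?_, ?_⟩
  · unfold PPUle
    rwa [mul_inv_cancel_right]
  · unfold PPUle
    rwa [comm, mul_inv_cancel_right]
  · intro c hc h1 h2
    have hcn : PPUneg k V b c := by
      have := neg_mul' h1 hx
      rwa [inv_mul_cancel_right] at this
    refine ⟨PPU_mul hc (PPU_inv (PPU_mul hy.1 hx.1)), fun v i hi => ?_⟩
    have e1 : c (x⁻¹ (Finsupp.single 0 v)) i = 0 := h1.2 v i hi
    have e2 : c (y⁻¹ (Finsupp.single 0 v)) i = 0 := h2.2 v i hi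
    rw [mul_inv_rev, LinearEquiv.mul_apply, LinearEquiv.mul_apply, m2, map_sub, map_add,
      Finsupp.sub_apply, Finsupp.add_apply, e1, e2, hcn.2 v i hi]
    simp

theorem le_shift {b : LinearMap.BilinForm k V} {g j : (ℤ →₀ V) ≃ₗ[k] (ℤ →₀ V)}
    (hg : IsPPU k V b g) (hj : IsPPU k V b j) (n : ℤ) :
    PPUle b (shift k V n * g) j ↔ PPUle b g (shift k V (-n) * j) := by
  unfold PPUle
  rw [mul_inv_rev, shift_neg', inv_inv, mul_assoc, ← mul_assoc g,
    (commute_shift (PPU_mul hg (PPU_inv hj)).1.1 n).eq]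

theorem normal' {b : LinearMap.BilinForm k V} (g h j : (ℤ →₀ V) ≃ₗ[k] (ℤ →₀ V))
    (hg : IsPPU k V b g) (hh : IsPPU k V b h) (H : IsJoinC b g h j) (n : ℤ) :
    IsJoinC b (shift k V n * g) (shift k V n * h) (shift k V n * j) := by
  obtain ⟨hj, h1, h2, h3⟩ := H
  have hsj := PPU_mul (PPU_shift b n) hj
  have e : shift k V (-n) * (shift k V n * j) = j := by rw [shift_neg', inv_mul_cancel_left]
  refine ⟨hsj, ?_, ?_, fun c hc hgc hhc => ?_⟩
  · rwa [le_shift hg hsj, e]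
  · rwa [le_shift hh hsj, e]
  · rw [le_shift hg hc] at hgc
    rw [le_shift hh hc] at hhc
    rw [le_shift hj hc]
    exact h3 _ (PPU_mul (PPU_shift b _) hc) hgc hhc

theorem pU_mul {b : LinearMap.BilinForm k V} (hsymm : ∀ v w : V, b v w = b w v)
    (haniso : ∀ v : V, b v v = 0 → v = 0) (U : Submodule k V) (πU πUs : V →ₗ[k] V)
    (h1 : ∀ v : V, πU v ∈ U ∧ v - πU v ∈ orthoC k V b U)
    (h2 : ∀ v : V, πUs v ∈ orthoC k V b U ∧ v - πUs v ∈ orthoC k V b (orthoC k V b U))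
    (pU pUs : (ℤ →₀ V) ≃ₗ[k] (ℤ →₀ V))
    (hp : (pU : (ℤ →₀ V) →ₗ[k] (ℤ →₀ V)) = pULin k V πU)
    (hps : (pUs : (ℤ →₀ V) →ₗ[k] (ℤ →₀ V)) = pULin k V πUs) :
    pU * pUs = shift k V (-1) := by
  have hU : ∀ u ∈ U, u ∈ orthoC k V b (orthoC k V b U) := by
    intro u hu w hw
    rw [hsymm]
    exact hw u hu
  have hs : ∀ v, πUs v = v - πU v := by
    intro v
    have ha : v - πU v - πUs v ∈ orthoC k V b U := Submodule.sub_mem _ (h1 v).2 (h2 v).1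
    have hb : v - πU v - πUs v ∈ orthoC k V b (orthoC k V b U) := by
      have := Submodule.sub_mem _ (h2 v).2 (hU _ (h1 v).1)
      rwa [sub_right_comm] at this
    exact (sub_eq_zero.1 (haniso _ (hb _ ha))).symm
  have hid : ∀ v, πU (πU v) = πU v := by
    intro v
    exact (sub_eq_zero.1 (haniso _ ((h1 (πU v)).2 _
      (Submodule.sub_mem _ (h1 v).1 (h1 (πU v)).1)))).symm
  have a1 : ∀ v, pU v = pULin k V πU v := fun v => LinearMap.congr_fun hp v
  have a2 : ∀ v, pUs v = pULin k V πUs v := fun v => LinearMap.congr_fun hps v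
  have a3 : ∀ (π : V →ₗ[k] V) i v, pULin k V π (Finsupp.single i v) =
      Finsupp.single (i - 1) (v - π v) + Finsupp.single i (π v) := by
    intro π i v
    simp only [pULin, LinearMap.add_apply, LinearMap.comp_apply,
      Finsupp.mapRange.linearMap_apply, Finsupp.mapRange_single, LinearEquiv.coe_coe, shift_single,
      LinearMap.sub_apply, LinearMap.id_apply]
    rw [← sub_eq_add_neg]
  apply LinearEquiv.ext
  intro u
  rw [LinearEquiv.mul_apply, a1, a2]
  induction u using Finsupp.induction_linear with
  | zero => simp
  | add f g hf hg => simp only [map_add, hf, hg]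
  | single i v =>
    rw [a3, map_add, a3, a3, shift_single, hs, map_sub, map_sub, hid,
      sub_self, sub_zero, sub_zero, sub_sub_cancel, sub_self, Finsupp.single_zero, Finsupp.single_zero,
      zero_add, add_zero, ← Finsupp.single_add, add_sub_cancel, ← sub_eq_add_neg]

end aux

/-- `Δ = t⁻¹·id` is a singular strong order unit of `PPU(b)`:
it is normal, an order unit, and singular; moreover `p_U p_{U*} = Δ`, so the
orthocomplementation `g ↦ g⁻¹Δ` of the interval `[Δ, id]` sends `p_U` to `p_{U*}`. -/
theorem stmt19 [FiniteDimensional k V] (b : LinearMap.BilinForm k V)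
    (hsymm : ∀ v w : V, b v w = b w v)
    (haniso : ∀ v : V, b v v = 0 → v = 0) :
    (∀ g h j : (ℤ →₀ V) ≃ₗ[k] (ℤ →₀ V), IsPPU k V b g → IsPPU k V b h →
      IsJoinC b g h j →
      IsJoinC b (shift k V (-1) * g) (shift k V (-1) * h) (shift k V (-1) * j)) ∧
    (∀ g : (ℤ →₀ V) ≃ₗ[k] (ℤ →₀ V), IsPPU k V b g →
      ∃ m : ℤ, PPUle b g (shift k V (-1) ^ m)) ∧
    (∀ x y : (ℤ →₀ V) ≃ₗ[k] (ℤ →₀ V), PPUneg k V b x → PPUneg k V b y →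
      PPUle b (shift k V (-1)) (x * y) → IsMeetC b x y (y * x)) ∧
    (∀ (U : Submodule k V) (πU πUs : V →ₗ[k] V),
      (∀ v : V, πU v ∈ U ∧ v - πU v ∈ orthoC k V b U) →
      (∀ v : V, πUs v ∈ orthoC k V b U ∧ v - πUs v ∈ orthoC k V b (orthoC k V b U)) →
      ∀ pU pUs : (ℤ →₀ V) ≃ₗ[k] (ℤ →₀ V),
        (pU : (ℤ →₀ V) →ₗ[k] (ℤ →₀ V)) = pULin k V πU →
        (pUs : (ℤ →₀ V) →ₗ[k] (ℤ →₀ V)) = pULin k V πUs →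
        pU * pUs = shift k V (-1) ∧ pU⁻¹ * shift k V (-1) = pUs) := by
  refine ⟨fun g h j hg hh H => normal' g h j hg hh H (-1), order_unit b,
    singular hsymm haniso, fun U πU πUs h1 h2 pU pUs hp hps => ?_⟩
  have := pU_mul hsymm haniso U πU πUs h1 h2 pU pUs hp hps
  exact ⟨this, by rw [← this, inv_mul_cancel_left]⟩
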